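/- arXiv:2111.01235 — 2 statements merged into one kernel-verified Lean document; each statement's English description precedes it below -/
import Mathlib

section
/- Let N ≥ 2 and M ≥ 1, let Cb : Fin N → Fin M → ℝ and C : Fin N → Fin M → ℝ be the best-set and candidate cost matrices, and fix indices p q : Fin N. Let R_p ⊆ Fin M be the set of cost-function indices r for which row p attains the minimum of column r of Cb (i.e., Cb p r ≤ Cb i r for all i), and define the benefit B(p,q) = ∑_{r ∈ R_p} (Cb p r − min (C q r) (min_{i ≠ p} Cb i r)). Let Cb' be the matrix obtained from Cb by replacing row p with row q of C (Cb' = Function.update Cb p (C q)). Then EMC(Cb') ≤ EMC(Cb) − B(p,q)/M, where EMC(A) = (1/M)·∑_{j : Fin M} (min_{i : Fin N} A i j). (Correctness of the benefit computation of Algorithm 4: the computed benefit is a lower bound on the actual reduction in Expected Minimum Cost from a single row swap.) -/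
/-- Expected Minimum Cost of a recourse-set cost matrix `A : Fin N → Fin M → ℝ`:
the average over the `M` cost-function samples of the minimum cost over the
`N` counterfactuals. -/
noncomputable def EMC {N M : ℕ} (hN : 1 ≤ N) (A : Fin N → Fin M → ℝ) : ℝ :=
  (1 / (M : ℝ)) *
    ∑ j : Fin M, Finset.univ.inf' ⟨⟨0, hN⟩, Finset.mem_univ _⟩ (fun i => A i j)

/-- `min_{i ≠ p} Cb i r`: the minimum cost in column `r` of `Cb` over all rows
other than `p` (nonempty since `N ≥ 2`). -/
noncomputable def minOther {N M : ℕ} (hN : 2 ≤ N) (Cb : Fin N → Fin M → ℝ)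
    (p : Fin N) (r : Fin M) : ℝ :=
  (Finset.univ.erase p).inf'
    (Finset.card_pos.mp (by
      rw [Finset.card_erase_of_mem (Finset.mem_univ p), Finset.card_univ,
        Fintype.card_fin]
      omega))
    (fun i => Cb i r)

/-- The benefit `B(p,q)` computed by Algorithm 4: the sum, over the
cost-function indices `r` for which row `p` attains the minimum of column `r`
of `Cb`, of `Cb p r − min (C q r) (min_{i ≠ p} Cb i r)`. -/
noncomputable def benefit {N M : ℕ} (hN : 2 ≤ N) (Cb C : Fin N → Fin M → ℝ)
    (p q : Fin N) : ℝ :=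
  ∑ r ∈ Finset.univ.filter (fun r : Fin M => ∀ i : Fin N, Cb p r ≤ Cb i r),
    (Cb p r - min (C q r) (minOther hN Cb p r))

/- The minimum of column `r` is `min (Cb p r) (m r)`, where `m r` is its minimum over the rows
other than `p`; swapping row `p` changes the first argument to `C q r` and leaves `m r` alone. The
swap thus reduces column `r` by `min (Cb p r) (m r) - min (C q r) (m r)`. On the columns where row
`p` is minimal this is exactly the summand of the benefit. On the others the old minimum is `m r`,
so the reduction, which the benefit ignores, is nonnegative. -/

theorem inf'_eq_inf_inf'_erase {ι α : Type*} [DecidableEq ι] [SemilatticeInf α] {s : Finset ι}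
    {p : ι} (hp : p ∈ s) (hs : (s.erase p).Nonempty) (f : ι → α) :
    s.inf' ⟨p, hp⟩ f = f p ⊓ (s.erase p).inf' hs f := by
  rw [← Finset.inf'_insert hs f]
  exact Finset.inf'_congr _ (Finset.insert_erase hp).symm fun _ _ => rfl

section RowSwap

variable {N M : ℕ} (hN : 2 ≤ N) (Cb : Fin N → Fin M → ℝ) (p : Fin N)

theorem emc_eq_sum_min_minOther :
    EMC (one_le_two.trans hN) Cb = 1 / (M : ℝ) * ∑ r, min (Cb p r) (minOther hN Cb p r) := by
  unfold EMC minOther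
  congr! 2 with r
  exact inf'_eq_inf_inf'_erase (Finset.mem_univ p) _ fun i => Cb i r

theorem minOther_update_self (c : Fin M → ℝ) (r : Fin M) :
    minOther hN (Function.update Cb p c) p r = minOther hN Cb p r :=
  Finset.inf'_congr _ rfl fun i hi => by rw [Function.update_of_ne (Finset.ne_of_mem_erase hi)]

theorem emc_update_eq_sum_min_minOther (c : Fin M → ℝ) :
    EMC (one_le_two.trans hN) (Function.update Cb p c) =
      1 / (M : ℝ) * ∑ r, min (c r) (minOther hN Cb p r) := by
  simp only [emc_eq_sum_min_minOther hN _ p, minOther_update_self, Function.update_self]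

theorem emc_sub_emc_update (c : Fin M → ℝ) :
    EMC (one_le_two.trans hN) Cb - EMC (one_le_two.trans hN) (Function.update Cb p c) =
      (∑ r, (min (Cb p r) (minOther hN Cb p r) - min (c r) (minOther hN Cb p r))) / M := by
  rw [emc_eq_sum_min_minOther hN Cb p, emc_update_eq_sum_min_minOther, ← mul_sub,
    ← Finset.sum_sub_distrib, one_div_mul_eq_div]

theorem self_le_minOther_iff (r : Fin M) :
    Cb p r ≤ minOther hN Cb p r ↔ ∀ i, Cb p r ≤ Cb i r := by
  rw [minOther, Finset.le_inf'_iff]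
  refine ⟨fun h i => ?_, fun h i _ => h i⟩
  obtain rfl | hi := eq_or_ne i p
  · exact le_rfl
  · exact h i (Finset.mem_erase.2 ⟨hi, Finset.mem_univ i⟩)

theorem benefit_le_sum_min_sub_min (C : Fin N → Fin M → ℝ) (q : Fin N) :
    benefit hN Cb C p q ≤
      ∑ r, (min (Cb p r) (minOther hN Cb p r) - min (C q r) (minOther hN Cb p r)) := by
  simp only [benefit, ← self_le_minOther_iff hN, Finset.sum_filter]
  refine Finset.sum_le_sum fun r _ => ?_
  split_ifs with h
  · rw [min_eq_left h]
  · rw [min_eq_right (not_le.1 h).le]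
    exact sub_nonneg.2 (min_le_right _ _)

end RowSwap

/-- Correctness of the benefit computation of Algorithm 4: the computed benefit
`B(p,q)` is a lower bound on the actual reduction in Expected Minimum Cost from
replacing row `p` of the best-set matrix `Cb` with row `q` of the candidate
matrix `C`. -/
theorem benefit_le_emc_reduction {N M : ℕ} (hN : 2 ≤ N) (hM : 1 ≤ M)
    (Cb C : Fin N → Fin M → ℝ) (p q : Fin N) :
    EMC (by omega) (Function.update Cb p (C q)) ≤
      EMC (by omega) Cb - benefit hN Cb C p q / (M : ℝ) := by
  rw [le_sub_comm, emc_sub_emc_update hN]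
  gcongr
  exact benefit_le_sum_min_sub_min hN Cb p C q
end

section
/- Let X be a finite nonempty type (the space of feasible counterfactuals), let M ≥ 1, and let C : Fin M → X → ℝ assign to each of the M sampled cost functions the cost of each counterfactual. For a nonempty finite set S ⊆ X define EMC(S) = (1/M)·∑_{i : Fin M} (min_{s ∈ S} C i s). Then there exists a nonempty finite set S ⊆ X with cardinality at most M such that EMC(S) ≤ EMC(T) for every nonempty finite T ⊆ X; namely, a set containing for each i a minimizer of C i over X attains the global minimum (1/M)·∑_{i : Fin M} (min_{x : X} C i x) of EMC. (Remark 1: with set size at most the number of cost-function samples, the optimum Expected Minimum Cost is attained.) -/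
/-- Expected Minimum Cost of a nonempty finite recourse set `S ⊆ X` under `M`
sampled cost functions `C : Fin M → X → ℝ`: the average over the cost-function
samples of the minimum cost over the counterfactuals in `S`. -/
noncomputable def EMCset {X : Type*} {M : ℕ} (C : Fin M → X → ℝ)
    (S : Finset X) (hS : S.Nonempty) : ℝ :=
  (1 / (M : ℝ)) * ∑ i : Fin M, S.inf' hS (C i)

theorem exists_finset_card_le_forall_exists_mem {ι X : Type*} [Fintype ι] {P : ι → X → Prop}
    (h : ∀ i, ∃ x, P i x) :
    ∃ S : Finset X, S.card ≤ Fintype.card ι ∧ ∀ i, ∃ x ∈ S, P i x := by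
  classical
  choose f hf using h
  exact ⟨Finset.univ.image f, Finset.card_image_le,
    fun i => ⟨f i, Finset.mem_image_of_mem f (Finset.mem_univ i), hf i⟩⟩

theorem isLeast_image_inf' {X α : Type*} [LinearOrder α] {S : Finset X} (hS : S.Nonempty)
    (f : X → α) : IsLeast (f '' S) (S.inf' hS f) := by
  obtain ⟨x, hx, hfx⟩ := S.exists_mem_eq_inf' hS f
  exact ⟨⟨x, hx, hfx.symm⟩, Set.forall_mem_image.2 fun _ hy => S.inf'_le f hy⟩

section EMCset

variable {X : Type*} {M : ℕ} {C : Fin M → X → ℝ} {m : Fin M → ℝ} {S : Finset X}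

theorem le_EMCset (hS : S.Nonempty) (hm : ∀ i, m i ∈ lowerBounds (C i '' S)) :
    (1 / (M : ℝ)) * ∑ i, m i ≤ EMCset C S hS := by
  unfold EMCset
  gcongr with i
  exact hm i (isLeast_image_inf' hS (C i)).1

theorem EMCset_eq_of_isLeast (hS : S.Nonempty) (hm : ∀ i, IsLeast (C i '' S) (m i)) :
    EMCset C S hS = (1 / (M : ℝ)) * ∑ i, m i := by
  unfold EMCset
  congr! 2 with i
  exact (isLeast_image_inf' hS (C i)).unique (hm i)

end EMCset

theorem exists_optimal_recourse_set_general {X : Type*} {M : ℕ} (hM : 1 ≤ M)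
    (C : Fin M → X → ℝ) {m : Fin M → ℝ} (hm : ∀ i, IsLeast (Set.range (C i)) (m i)) :
    ∃ (S : Finset X) (hS : S.Nonempty),
      S.card ≤ M ∧
      (∀ i : Fin M, ∃ x ∈ S, C i x = m i) ∧
      (∀ (T : Finset X) (hT : T.Nonempty), EMCset C S hS ≤ EMCset C T hT) ∧
      EMCset C S hS = (1 / (M : ℝ)) * ∑ i : Fin M, m i := by
  obtain ⟨S, hcard, hmem⟩ := exists_finset_card_le_forall_exists_mem fun i => (hm i).1
  have hS : S.Nonempty := (hmem ⟨0, hM⟩).imp fun _ hx => hx.1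
  have hlower (T : Finset X) (i : Fin M) : m i ∈ lowerBounds (C i '' T) :=
    lowerBounds_mono_set (Set.image_subset_range _ _) (hm i).2
  have hEMC : EMCset C S hS = (1 / (M : ℝ)) * ∑ i, m i :=
    EMCset_eq_of_isLeast hS fun i => ⟨hmem i, hlower S i⟩
  exact ⟨S, hS, hcard.trans_eq (Fintype.card_fin M), hmem,
    fun T hT => hEMC.trans_le (le_EMCset hT (hlower T)), hEMC⟩

/-- Remark 1: with set size at most the number `M` of cost-function samples,
the optimum Expected Minimum Cost is attained. Namely, there is a nonempty set
`S` of cardinality at most `M`, containing for each `i` a minimizer of `C i`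
over `X`, such that `EMC S ≤ EMC T` for every nonempty finite `T ⊆ X`, and
`EMC S` equals the global minimum `(1/M) · ∑_i min_{x : X} C i x`. -/
theorem exists_optimal_recourse_set {X : Type*} [Fintype X] [Nonempty X]
    {M : ℕ} (hM : 1 ≤ M) (C : Fin M → X → ℝ) :
    ∃ (S : Finset X) (hS : S.Nonempty),
      S.card ≤ M ∧
      (∀ i : Fin M, ∃ x ∈ S,
        C i x = Finset.univ.inf' Finset.univ_nonempty (C i)) ∧
      (∀ (T : Finset X) (hT : T.Nonempty), EMCset C S hS ≤ EMCset C T hT) ∧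
      EMCset C S hS =
        (1 / (M : ℝ)) * ∑ i : Fin M, Finset.univ.inf' Finset.univ_nonempty (C i) :=
  exists_optimal_recourse_set_general hM C fun i => by
    simpa only [Finset.coe_univ, Set.image_univ] using
      isLeast_image_inf' Finset.univ_nonempty (C i)
end
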